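/- arXiv:2504.06355 — 5 statements merged into one kernel-verified Lean document; each statement's English description precedes it below -/
import Mathlib

section
/- The Cesàro-average measure P̃ = (1/(n+1)) Σ_{k=0}^{n} μ̃·M̃^k is the unique probability measure on S̃ that is invariant under the augmented kernel M̃, i.e. if Q is a probability measure on S̃ with Q·M̃ = Q, then Q = P̃. -/
open MeasureTheory ProbabilityTheory
open scoped ENNReal

/-!
The kernel `Mt` moves the level `{p | p.2 = i}` into the level `{p | p.2 = i + 1}`, cyclically
(`Fin.last n + 1 = 0`). Restricting `Q = Q.bind Mt` to a level therefore gives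
`Q|_{i+1} = (Q|_i).bind Mt` (`restrict_level_succ`), so all levels carry the same mass, namely
`(n + 1)⁻¹`. From the last level `Mt` restarts at `μ ⊗ δ₀` whatever the state, which pins down
`Q|_0 = (n + 1)⁻¹ • (μ ⊗ δ₀)`, and the recursion then determines `Q` on every other level.
-/

/-- If a kernel maps each level `i` into level `i + 1`, the part of an invariant measure on
level `i + 1` is the image of its part on level `i`. -/
lemma restrict_level_succ {S : Type*} [MeasurableSpace S] {n : ℕ}
    (Mt : Kernel (S × Fin (n + 1)) (S × Fin (n + 1)))
    (hlev : ∀ x, Mt x (Prod.snd ⁻¹' {x.2 + 1})ᶜ = 0)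
    (Q : Measure (S × Fin (n + 1))) (hQ : Q.bind ⇑Mt = Q) (i : Fin (n + 1)) :
    Q.restrict (Prod.snd ⁻¹' {i + 1}) = (Q.restrict (Prod.snd ⁻¹' {i})).bind ⇑Mt := by
  have hA : ∀ j : Fin (n + 1), MeasurableSet (Prod.snd ⁻¹' {j} : Set (S × Fin (n + 1))) :=
    fun j => measurable_snd (measurableSet_singleton j)
  ext B hB
  rw [Measure.restrict_apply hB, Measure.bind_apply hB Mt.measurable.aemeasurable]
  conv_lhs => rw [← hQ]
  rw [Measure.bind_apply (hB.inter (hA _)) Mt.measurable.aemeasurable, ← lintegral_indicator (hA i)]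
  refine lintegral_congr fun x => ?_
  by_cases hx : x.2 = i
  · rw [Set.indicator_of_mem (by simpa using hx), ← hx]
    exact measure_inter_conull (hlev x)
  · rw [Set.indicator_of_notMem (by simpa using hx)]
    refine measure_mono_null (fun y hy => ?_) (hlev x)
    have h2 : y.2 = i + 1 := hy.2
    simpa [h2] using fun h : i = x.2 => hx h.symm

/-- On a countably generated state space, the Cesàro average
`P̃ = (1/(n+1)) ∑_{k=0}^{n} μ̃·M̃^k` is the *unique* probability measure on the
augmented space `S̃ = S × Fin (n+1)` invariant under the augmented kernel `M̃`. -/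
theorem uniqueness_of_invariant_measure
    {S : Type*} [MeasurableSpace S] [MeasurableSpace.CountablyGenerated S]
    (μ : Measure S) [IsProbabilityMeasure μ]
    (M : Kernel S S) [IsMarkovKernel M]
    (n : ℕ) (hn : 0 < n)
    (Mt : Kernel (S × Fin (n + 1)) (S × Fin (n + 1))) [IsMarkovKernel Mt]
    (hMt : ∀ (s : S) (i : Fin (n + 1)),
      Mt (s, i) = if i = Fin.last n
        then μ.prod (Measure.dirac (0 : Fin (n + 1)))
        else (M s).prod (Measure.dirac (i + 1)))
    (Q : Measure (S × Fin (n + 1))) [IsProbabilityMeasure Q]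
    (hQ : Q.bind ⇑Mt = Q) :
    Q = ((n : ℝ≥0∞) + 1)⁻¹ • ∑ k ∈ Finset.range (n + 1),
      (fun P : Measure (S × Fin (n + 1)) => P.bind ⇑Mt)^[k]
        (μ.prod (Measure.dirac (0 : Fin (n + 1)))) := by
  have hA : ∀ j : Fin (n + 1), MeasurableSet (Prod.snd ⁻¹' {j} : Set (S × Fin (n + 1))) :=
    fun j => measurable_snd (measurableSet_singleton j)
  have hdirac : ∀ (ν : Measure S) [IsProbabilityMeasure ν] (j : Fin (n + 1)),
      ν.prod (Measure.dirac j) (Prod.snd ⁻¹' {j})ᶜ = 0 := by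
    intro ν _ j
    rw [← Set.preimage_compl, ← Set.univ_prod, Measure.prod_prod]
    simp
  have hlev : ∀ x, Mt x (Prod.snd ⁻¹' {x.2 + 1})ᶜ = 0 := by
    rintro ⟨s, i⟩
    rw [hMt]
    split_ifs with h
    · subst h
      simpa using hdirac μ 0
    · exact hdirac (M s) (i + 1)
  have hstep := restrict_level_succ Mt hlev Q hQ
  have hmass : ∀ i : Fin (n + 1), Q (Prod.snd ⁻¹' {i + 1}) = Q (Prod.snd ⁻¹' {i}) := by
    intro i
    have h := congrArg (fun ν : Measure (S × Fin (n + 1)) => ν Set.univ) (hstep i)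
    simpa [Measure.bind_apply MeasurableSet.univ Mt.measurable.aemeasurable] using h
  have hsucc : ∀ k (hk : k + 1 < n + 1),
      (⟨k + 1, hk⟩ : Fin (n + 1)) = ⟨k, by omega⟩ + 1 := by
    intro k hk
    ext
    rw [Fin.val_add_one_of_lt (by rw [Fin.lt_def, Fin.val_last]; simpa using hk)]
  set c := Q (Prod.snd ⁻¹' {(0 : Fin (n + 1))}) with hc
  have hconst : ∀ k (hk : k < n + 1), Q (Prod.snd ⁻¹' {(⟨k, hk⟩ : Fin (n + 1))}) = c := by
    intro k
    induction k with
    | zero => intro hk; rfl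
    | succ k ih => intro hk; rw [hsucc, hmass, ih]
  have hsum : Q = ∑ i : Fin (n + 1), Q.restrict (Prod.snd ⁻¹' {i}) := by
    rw [← Measure.sum_fintype, ← Measure.restrict_iUnion _ hA]
    · rw [← Set.preimage_iUnion, Set.iUnion_of_singleton, Set.preimage_univ, Measure.restrict_univ]
    · intro i j hij
      exact Disjoint.preimage _ (by simpa using hij)
  have hcval : c = ((n : ℝ≥0∞) + 1)⁻¹ := by
    have h := congrArg (fun ν : Measure (S × Fin (n + 1)) => ν Set.univ) hsum
    have h' : (1 : ℝ≥0∞) = (n + 1) * c := by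
      simpa [Measure.finsetSum_apply, fun i : Fin (n + 1) => hconst i.1 i.2] using h
    refine ENNReal.eq_inv_of_mul_eq_one_left ?_
    rw [mul_comm, ← h']
  have hzero : Q.restrict (Prod.snd ⁻¹' {(0 : Fin (n + 1))})
      = c • μ.prod (Measure.dirac (0 : Fin (n + 1))) := by
    have h := hstep (Fin.last n)
    rw [Fin.last_add_one] at h
    rw [h]
    ext B hB
    rw [Measure.bind_apply hB Mt.measurable.aemeasurable,
      setLIntegral_congr_fun (g := fun _ => μ.prod (Measure.dirac (0 : Fin (n + 1))) B) (hA _)]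
    · rw [setLIntegral_const, show Q (Prod.snd ⁻¹' {Fin.last n}) = c from hconst n _, mul_comm]
      rfl
    · rintro ⟨s, i⟩ hi
      have hi' : i = Fin.last n := hi
      simp only [hMt, if_pos hi']
  have hiter : ∀ k (hk : k < n + 1), Q.restrict (Prod.snd ⁻¹' {(⟨k, hk⟩ : Fin (n + 1))})
      = c • (fun P : Measure (S × Fin (n + 1)) => P.bind ⇑Mt)^[k]
        (μ.prod (Measure.dirac (0 : Fin (n + 1)))) := by
    intro k
    induction k with
    | zero => intro hk; exact hzero
    | succ k ih =>
      intro hk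
      rw [hsucc, hstep, ih, Function.iterate_succ_apply']
      ext B hB
      simp only [Measure.smul_apply]
      rw [Measure.bind_apply hB Mt.measurable.aemeasurable, lintegral_smul_measure,
        Measure.bind_apply hB Mt.measurable.aemeasurable]
  rw [← hcval, Finset.sum_range, Finset.smul_sum]
  conv_lhs => rw [hsum]
  exact Finset.sum_congr rfl fun i _ => hiter i.1 i.2
end

section
/- For every point x ∈ S̃ and every measurable set B ⊆ S̃: if P̃(B) > 0 then Σ_{k=1}^{∞} M̃^k(x, B) = ∞, where P̃ = (1/(n+1)) Σ_{k=0}^{n} μ̃·M̃^k. In particular, the augmented Markov chain is P̃-irreducible and recurrent. -/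
open MeasureTheory ProbabilityTheory
open scoped ENNReal

/-!
Write `F P = P.bind Mt` for one step of the chain on laws. The second coordinate is a clock: from
level `i < n` it moves to `i + 1` whatever the first coordinate does, and from level `n` the law is
reset to `μ̃ = μ ⊗ δ₀`. Hence a probability law carried by level `i` becomes exactly `μ̃` after
`n - i + 1` steps (`iterate_bind_eq_reset`). In particular `δₓ` reaches `μ̃` after
`a = n - x.2 + 1` steps and `μ̃` is periodic with period `n + 1`. If `P̃ B > 0`, then
`(F^k μ̃) B > 0` for some `k ≤ n`, and this same value occurs in the series at all the times
`a + (n + 1) j + k`, so the series diverges.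
-/

/-- A probability law carried by level `i` is reset to `μ ⊗ δ₀` after `m + 1` steps, where
`m = n - i`: the clock needs `m` steps to reach the top level, and one more to be reset. -/
lemma iterate_bind_eq_reset {S : Type*} [MeasurableSpace S]
    (μ : Measure S) [IsProbabilityMeasure μ]
    (M : Kernel S S) [IsMarkovKernel M] (n : ℕ)
    (Mt : Kernel (S × Fin (n + 1)) (S × Fin (n + 1))) [IsMarkovKernel Mt]
    (hMt : ∀ (s : S) (i : Fin (n + 1)),
      Mt (s, i) = if i = Fin.last n
        then μ.prod (Measure.dirac (0 : Fin (n + 1)))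
        else (M s).prod (Measure.dirac (i + 1)))
    (m : ℕ) (i : Fin (n + 1)) (him : (i : ℕ) + m = n)
    (P : Measure (S × Fin (n + 1))) [IsProbabilityMeasure P] (hP : ∀ᵐ y ∂P, y.2 = i) :
    (fun P : Measure (S × Fin (n + 1)) => P.bind ⇑Mt)^[m + 1] P
      = μ.prod (Measure.dirac (0 : Fin (n + 1))) := by
  induction m generalizing i P with
  | zero =>
    have hi : i = Fin.last n := Fin.ext (by simpa using him)
    ext A hA
    have hae : ∀ᵐ y ∂P, Mt y A = μ.prod (Measure.dirac (0 : Fin (n + 1))) A := by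
      filter_upwards [hP] with y hy
      obtain ⟨s, j⟩ := y
      rw [hMt, if_pos (hy.trans hi)]
    simp only [zero_add, Function.iterate_one]
    rw [Measure.bind_apply hA Mt.measurable.aemeasurable, lintegral_congr_ae hae]
    simp
  | succ m ih =>
    have hi : i ≠ Fin.last n := by
      rintro rfl
      simp at him
    rw [Function.iterate_succ_apply]
    -- Below the top level, `i + 1` in `Fin (n + 1)` does not wrap around.
    have hval : ((i + 1 : Fin (n + 1)) : ℕ) = i + 1 :=
      Fin.val_add_one_of_lt (Fin.lt_last_iff_ne_last.2 hi)
    refine ih (i + 1) (by omega) (P.bind Mt) ?_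
    have hmeas : MeasurableSet {y : S × Fin (n + 1) | ¬ y.2 = i + 1} :=
      measurable_snd (MeasurableSet.of_discrete (s := {j : Fin (n + 1) | ¬ j = i + 1}))
    rw [ae_iff, Measure.bind_apply hmeas Mt.measurable.aemeasurable,
      lintegral_eq_zero_iff (Mt.measurable_coe hmeas)]
    filter_upwards [hP] with y hy
    obtain ⟨s, j⟩ := y
    obtain rfl : j = i := hy
    have hset : {y : S × Fin (n + 1) | ¬ y.2 = j + 1}
        = Set.univ ×ˢ {k : Fin (n + 1) | ¬ k = j + 1} := by
      ext y; simp
    rw [hMt, if_neg hi, hset, Measure.prod_prod]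
    simp

/-- For every point `x` of the augmented space `S̃ = S × Fin (n+1)`
and every measurable set `B ⊆ S̃`: if `P̃ B > 0`, where
`P̃ = (1/(n+1)) ∑_{k=0}^{n} μ̃·M̃^k`, then `∑_{k=1}^{∞} M̃^k(x, B) = ∞`;
i.e. the augmented chain is `P̃`-irreducible and recurrent. -/
theorem augmented_chain_irreducible_recurrent
    {S : Type*} [MeasurableSpace S]
    (μ : Measure S) [IsProbabilityMeasure μ]
    (M : Kernel S S) [IsMarkovKernel M]
    (n : ℕ) (hn : 0 < n)
    (Mt : Kernel (S × Fin (n + 1)) (S × Fin (n + 1))) [IsMarkovKernel Mt]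
    (hMt : ∀ (s : S) (i : Fin (n + 1)),
      Mt (s, i) = if i = Fin.last n
        then μ.prod (Measure.dirac (0 : Fin (n + 1)))
        else (M s).prod (Measure.dirac (i + 1)))
    (x : S × Fin (n + 1)) (B : Set (S × Fin (n + 1))) (hB : MeasurableSet B)
    (hBpos : 0 < (((n : ℝ≥0∞) + 1)⁻¹ • ∑ k ∈ Finset.range (n + 1),
      (fun P : Measure (S × Fin (n + 1)) => P.bind ⇑Mt)^[k]
        (μ.prod (Measure.dirac (0 : Fin (n + 1))))) B) :
    (∑' k : ℕ, ((fun P : Measure (S × Fin (n + 1)) => P.bind ⇑Mt)^[k + 1]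
      (Measure.dirac x)) B) = ∞ := by
  set F := fun P : Measure (S × Fin (n + 1)) => P.bind ⇑Mt with hF
  set μt := μ.prod (Measure.dirac (0 : Fin (n + 1))) with hμt
  obtain ⟨k, hk⟩ : ∃ k, (F^[k] μt) B ≠ 0 := by
    by_contra! h
    simp [h] at hBpos
  have hperiod : F^[n + 1] μt = μt := by
    refine iterate_bind_eq_reset μ M n Mt hMt n 0 (by simp) μt ?_
    have hset : {y : S × Fin (n + 1) | ¬ y.2 = 0}
        = Set.univ ×ˢ {k : Fin (n + 1) | ¬ k = 0} := by
      ext y; simp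
    rw [ae_iff, hset, hμt, Measure.prod_prod]
    simp
  have hstart : F^[(n - x.2) + 1] (Measure.dirac x) = μt := by
    refine iterate_bind_eq_reset μ M n Mt hMt (n - x.2) x.2 (by omega) _ ?_
    have hmeas : MeasurableSet {y : S × Fin (n + 1) | y.2 = x.2} :=
      measurable_snd (MeasurableSet.of_discrete (s := {j : Fin (n + 1) | j = x.2}))
    exact (ae_dirac_iff hmeas).2 rfl
  have hvisit : ∀ j : ℕ, F^[(k + (n + 1) * j + (n - x.2)) + 1] (Measure.dirac x) = F^[k] μt := by
    intro j
    rw [add_assoc, Function.iterate_add_apply, hstart, Function.iterate_add_apply,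
      Function.iterate_mul, Function.iterate_fixed hperiod]
  have hinj : Function.Injective fun j : ℕ => k + (n + 1) * j + (n - (x.2 : ℕ)) := by
    intro a b hab
    exact Nat.eq_of_mul_eq_mul_left (Nat.succ_pos n) (by simpa using hab)
  refine top_unique ?_
  calc (∞ : ℝ≥0∞) = ∑' _ : ℕ, (F^[k] μt) B := (ENNReal.tsum_const_eq_top_of_ne_zero hk).symm
    _ = ∑' j : ℕ, (F^[(k + (n + 1) * j + (n - x.2)) + 1] (Measure.dirac x)) B := by
      simp only [hvisit]
    _ ≤ ∑' k : ℕ, (F^[k + 1] (Measure.dirac x)) B :=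
      ENNReal.tsum_comp_le_tsum_of_injective hinj
        fun k => (F^[k + 1] (Measure.dirac x)) B
end

section
/- Data processing inequality for concave information rewards: let κ : S → Y be measurable, V a σ-finite measure on S, and P a probability measure on S with P ≪ V and density p = dP/dV with p > 0 V-a.e. Let P' = κ_*P and V' = κ_*V (assumed σ-finite) with density p' = dP'/dV'. If f : (0, ∞) → ℝ is concave and the integrals are well-defined, then ∫_S f(1/p(s)) dP(s) ≤ ∫_Y f(1/p'(y)) dP'(y). Moreover, if f is strictly concave, equality holds if and only if 1/p = (1/p') ∘ κ holds P-almost everywhere. -/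
/-!
Write `X = 1 / p` and `W = (1 / p') ∘ κ`. Under `P`, `W` is the conditional expectation of `X`
given `κ`, in the sense that `∫ h(κ) X dP = ∫ h dV' = ∫ h(κ) W dP` for every `V'`-integrable `h`
(`integral_mul_inv_density`, applied to `p` and to `p'`), so the theorem is a conditional Jensen
inequality. `X` itself need not be `P`-integrable, as `∫ X dP = V(S)` may be infinite, so Jensen is
proved by hand: with `g` the right derivative of `f`, the tangent gap
`D = f(W) + g(W) (X - W) - f(X)` is nonnegative (`tangent_le`). Let `B n` be the increasing sets of
finite `V'`-measure on which `|g(1 / p')| ≤ n`. Taking `h = 1_{B n} g(1 / p')` gives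
`∫_{κ⁻¹ (B n)} D dP = ∫_{κ⁻¹ (B n)} (f(W) - f(X)) dP`, and letting `n → ∞` proves the inequality.
The left side is nonnegative and nondecreasing in `n`, so equality in the limit forces `D = 0` on
every `κ⁻¹ (B n)`, and for strictly concave `f` the gap vanishes only where `X = W` (`tangent_lt`).
-/

open MeasureTheory
open scoped ENNReal

/-- The right derivative of a concave function is a supergradient. -/
lemma tangent_le {f : ℝ → ℝ} (hf : ConcaveOn ℝ (Set.Ioi 0) f) {w x : ℝ} (hw : 0 < w)
    (hx : 0 < x) : f x ≤ f w + derivWithin f (Set.Ioi w) w * (x - w) := by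
  have hwi : w ∈ interior (Set.Ioi (0 : ℝ)) := by rwa [interior_Ioi]
  have hdr : DifferentiableWithinAt ℝ (-f) (Set.Ioi w) w :=
    (hf.neg.hasDerivWithinAt_rightDeriv_of_mem_interior hwi).differentiableWithinAt
  have hneg : derivWithin (-f) (Set.Ioi w) w = - derivWithin f (Set.Ioi w) w := by
    rw [derivWithin.neg]
  rcases lt_trichotomy x w with h | h | h
  · have h1 := hf.neg.slope_le_leftDeriv_of_mem_interior hx hwi h
    have h2 := hf.neg.leftDeriv_le_rightDeriv_of_mem_interior hwi
    have h3 := h1.trans h2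
    rw [hneg, slope_def_field, div_le_iff₀ (by linarith)] at h3
    simp only [Pi.neg_apply] at h3
    linarith
  · subst h; simp
  · have h3 := hf.neg.rightDeriv_le_slope_of_mem_interior hwi hx h
    rw [hneg, slope_def_field, le_div_iff₀ (by linarith)] at h3
    simp only [Pi.neg_apply] at h3
    linarith

/-- Strictness follows from `tangent_le` at the midpoint of `w` and `x`. -/
lemma tangent_lt {f : ℝ → ℝ} (hf : StrictConcaveOn ℝ (Set.Ioi 0) f) {w x : ℝ} (hw : 0 < w)
    (hx : 0 < x) (hne : x ≠ w) : f x < f w + derivWithin f (Set.Ioi w) w * (x - w) := by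
  have h1 := tangent_le hf.concaveOn hw (x := (1 / 2 : ℝ) • x + (1 / 2 : ℝ) • w)
    (by simp only [smul_eq_mul]; positivity)
  have h2 := hf.2 hx hw hne (show (0 : ℝ) < 1 / 2 by norm_num)
    (show (0 : ℝ) < 1 / 2 by norm_num) (by norm_num)
  simp only [smul_eq_mul] at h1 h2
  linarith

/-- Integrating against `1 / q` with respect to `q · m` is integrating with respect to `m`. -/
lemma integral_mul_inv_density {α : Type*} [MeasurableSpace α] {m : Measure α} {q : α → ℝ}
    (hq : Measurable q) (hpos : ∀ᵐ a ∂m, 0 < q a) {h : α → ℝ} (hh : Integrable h m) :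
    Integrable (fun a => h a * (1 / q a)) (m.withDensity fun a => ENNReal.ofReal (q a)) ∧
      ∫ a, h a * (1 / q a) ∂(m.withDensity fun a => ENNReal.ofReal (q a)) = ∫ a, h a ∂m := by
  have hae : (fun a => (ENNReal.ofReal (q a)).toReal • (h a * (1 / q a))) =ᵐ[m] h := by
    filter_upwards [hpos] with a ha
    rw [ENNReal.toReal_ofReal ha.le, smul_eq_mul]
    field_simp
  constructor
  · rw [integrable_withDensity_iff_integrable_smul' hq.ennreal_ofReal (by simp)]
    exact hh.congr hae.symm
  · rw [integral_withDensity_eq_integral_toReal_smul hq.ennreal_ofReal (by simp)]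
    exact integral_congr_ae hae

/-- Data processing inequality for concave information rewards:
for a measurable statistic `κ : S → Y`, a σ-finite reference measure `V` with
pushforward `V' = κ_* V`, a probability measure `P = p·V` (with `p > 0` a.e.)
whose pushforward is `P' = κ_* P = p'·V'`, and a concave `f : (0,∞) → ℝ`,
`∫ f(1/p) dP ≤ ∫ f(1/p') dP'`; if moreover `f` is strictly concave, equality
holds iff `1/p = (1/p') ∘ κ` holds `P`-a.e. (i.e. `κ` is sufficient). -/
theorem data_processing_inequality_information_rewards
    {S Y : Type*} [MeasurableSpace S] [MeasurableSpace Y]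
    (κ : S → Y) (hκ : Measurable κ)
    (V : Measure S) [SigmaFinite V] [SigmaFinite (V.map κ)]
    (p : S → ℝ) (hp : Measurable p) (hppos : ∀ᵐ s ∂V, 0 < p s)
    (P : Measure S) [IsProbabilityMeasure P]
    (hP : P = V.withDensity (fun s => ENNReal.ofReal (p s)))
    (p' : Y → ℝ) (hp' : Measurable p') (hp'nonneg : ∀ᵐ y ∂(V.map κ), 0 ≤ p' y)
    (hP' : P.map κ = (V.map κ).withDensity (fun y => ENNReal.ofReal (p' y)))
    (f : ℝ → ℝ) (hf : ConcaveOn ℝ (Set.Ioi 0) f)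
    (hint : Integrable (fun s => f (1 / p s)) P)
    (hint' : Integrable (fun y => f (1 / p' y)) (P.map κ)) :
    (∫ s, f (1 / p s) ∂P ≤ ∫ y, f (1 / p' y) ∂(P.map κ)) ∧
    (StrictConcaveOn ℝ (Set.Ioi 0) f →
      ((∫ s, f (1 / p s) ∂P = ∫ y, f (1 / p' y) ∂(P.map κ)) ↔
        (fun s => 1 / p s) =ᵐ[P] (fun s => 1 / p' (κ s)))) := by
  have hVP : V ≪ P := by
    rw [hP]
    refine withDensity_absolutelyContinuous' hp.ennreal_ofReal.aemeasurable ?_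
    filter_upwards [hppos] with s hs
    simpa using hs
  have hPV : P ≪ V := by
    rw [hP]
    exact withDensity_absolutelyContinuous _ _
  -- `p'` is positive a.e. for `P.map κ`, being its density, hence for `V.map κ` because `V ≪ P`.
  have hp'pos : ∀ᵐ y ∂(V.map κ), 0 < p' y := by
    have h1 : ∀ᵐ y ∂(P.map κ), 0 < p' y := by
      rw [hP', ae_withDensity_iff hp'.ennreal_ofReal]
      exact Filter.Eventually.of_forall fun y hy => by simpa using hy
    exact (hVP.map hκ).ae_le h1
  have hXpos : ∀ᵐ s ∂P, 0 < 1 / p s := by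
    filter_upwards [hPV.ae_le hppos] with s hs
    positivity
  have hWpos : ∀ᵐ s ∂P, 0 < 1 / p' (κ s) := by
    filter_upwards [hPV.ae_le (ae_of_ae_map hκ.aemeasurable hp'pos)] with s hs
    positivity
  set g : Y → ℝ := fun y => derivWithin f (Set.Ioi (1 / p' y)) (1 / p' y) with hg
  have hgm : Measurable g :=
    (measurable_derivWithin_Ioi f).comp (measurable_const.div hp')
  set D : S → ℝ := fun s =>
    f (1 / p' (κ s)) - f (1 / p s) + g (κ s) * (1 / p s - 1 / p' (κ s)) with hD
  have hD0 : ∀ᵐ s ∂P, 0 ≤ D s := by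
    filter_upwards [hXpos, hWpos] with s h1 h2
    have := tangent_le hf h2 h1
    simp only [hD, hg]
    linarith
  have hfW : Integrable (fun s => f (1 / p' (κ s))) P :=
    hint'.comp_aemeasurable hκ.aemeasurable
  have hWeq : ∫ y, f (1 / p' y) ∂(P.map κ) = ∫ s, f (1 / p' (κ s)) ∂P :=
    integral_map hκ.aemeasurable hint'.aestronglyMeasurable
  have hF : Integrable (fun s => f (1 / p' (κ s)) - f (1 / p s)) P := hfW.sub hint
  set B : ℕ → Set Y := fun n => spanningSets (V.map κ) n ∩ {y | |g y| ≤ n} with hB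
  have hBm : ∀ n, MeasurableSet (B n) := fun n =>
    (measurableSet_spanningSets _ n).inter (measurableSet_le hgm.abs measurable_const)
  have hBmono : Monotone B := by
    intro m n hmn y hy
    refine ⟨monotone_spanningSets _ hmn hy.1, ?_⟩
    have h1 : |g y| ≤ m := hy.2
    exact h1.trans (by exact_mod_cast hmn)
  have hBU : ⋃ n, B n = Set.univ := by
    refine Set.eq_univ_of_forall fun y => ?_
    obtain ⟨k, hk⟩ := exists_nat_ge |g y|
    have hy : y ∈ ⋃ n, spanningSets (V.map κ) n := by rw [iUnion_spanningSets]; trivial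
    obtain ⟨m, hm⟩ := Set.mem_iUnion.1 hy
    refine Set.mem_iUnion.2 ⟨max m k, monotone_spanningSets _ (le_max_left _ _) hm, ?_⟩
    exact hk.trans (by exact_mod_cast le_max_right m k)
  set A : ℕ → Set S := fun n => κ ⁻¹' B n with hA
  have hAm : ∀ n, MeasurableSet (A n) := fun n => hκ (hBm n)
  have hAmono : Monotone A := fun m n hmn => Set.preimage_mono (hBmono hmn)
  have hAU : ⋃ n, A n = Set.univ := by
    rw [hA, ← Set.preimage_iUnion, hBU, Set.preimage_univ]
  -- The linear term of the tangent gap integrates to zero over `A n`.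
  have hlin : ∀ n, IntegrableOn (fun s => g (κ s) * (1 / p s - 1 / p' (κ s))) (A n) P ∧
      ∫ s in A n, g (κ s) * (1 / p s - 1 / p' (κ s)) ∂P = 0 := by
    intro n
    set h : Y → ℝ := (B n).indicator g with hh
    have hhi : Integrable h (V.map κ) := by
      rw [hh, integrable_indicator_iff (hBm n)]
      refine Measure.integrableOn_of_bounded (M := n) ?_ hgm.aestronglyMeasurable ?_
      · exact ((measure_mono Set.inter_subset_left).trans_lt
          (measure_spanningSets_lt_top _ n)).ne
      · exact (ae_restrict_iff' (hBm n)).2 (Filter.Eventually.of_forall fun y hy => hy.2)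
    have hhV : Integrable (fun s => h (κ s)) V := hhi.comp_aemeasurable hκ.aemeasurable
    obtain ⟨i1, e1⟩ := integral_mul_inv_density hp hppos hhV
    obtain ⟨i2, e2⟩ := integral_mul_inv_density hp' hp'pos hhi
    rw [← hP] at i1 e1
    rw [← hP'] at i2 e2
    have i3 : Integrable (fun s => h (κ s) * (1 / p' (κ s))) P :=
      i2.comp_aemeasurable hκ.aemeasurable
    have e3 : ∫ s, h (κ s) * (1 / p' (κ s)) ∂P = ∫ s, h (κ s) * (1 / p s) ∂P := by
      rw [e1, ← integral_map hκ.aemeasurable hhi.aestronglyMeasurable, ← e2,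
        integral_map hκ.aemeasurable i2.aestronglyMeasurable]
    have hind : (A n).indicator (fun s => g (κ s) * (1 / p s - 1 / p' (κ s))) =
        fun s => h (κ s) * (1 / p s) - h (κ s) * (1 / p' (κ s)) := by
      funext s
      by_cases hs : κ s ∈ B n
      · have hs' : s ∈ A n := hs
        simp only [hh, Set.indicator_of_mem hs, Set.indicator_of_mem hs']
        ring
      · have hs' : s ∉ A n := hs
        simp only [hh, Set.indicator_of_notMem hs, Set.indicator_of_notMem hs']
        ring
    rw [← integrable_indicator_iff (hAm n), ← integral_indicator (hAm n), hind]
    exact ⟨i1.sub i3, by rw [integral_sub i1 i3, e3, sub_self]⟩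
  have hDi : ∀ n, IntegrableOn D (A n) P := fun n => hF.integrableOn.add (hlin n).1
  have hDe : ∀ n, ∫ s in A n, D s ∂P = ∫ s in A n, (f (1 / p' (κ s)) - f (1 / p s)) ∂P := by
    intro n
    simp only [hD]
    rw [integral_add hF.integrableOn (hlin n).1, (hlin n).2, add_zero]
  have hlim : Filter.Tendsto (fun n => ∫ s in A n, D s ∂P) Filter.atTop
      (nhds (∫ s, (f (1 / p' (κ s)) - f (1 / p s)) ∂P)) := by
    simp only [hDe]
    have := tendsto_setIntegral_of_monotone hAm hAmono hF.integrableOn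
    rwa [hAU, setIntegral_univ] at this
  have hJ0 : ∀ n, 0 ≤ ∫ s in A n, D s ∂P := fun n =>
    integral_nonneg_of_ae (ae_restrict_of_ae hD0)
  have hJmono : Monotone fun n => ∫ s in A n, D s ∂P := fun m n hmn =>
    setIntegral_mono_set (hDi n) (ae_restrict_of_ae hD0) (hAmono hmn).eventuallyLE
  have hsub := integral_sub hfW hint
  rw [hWeq]
  refine ⟨?_, fun hsf => ⟨fun heq => ?_, fun hae => ?_⟩⟩
  · have := ge_of_tendsto' hlim hJ0
    linarith
  · have hzero : ∀ n, ∫ s in A n, D s ∂P = 0 := by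
      intro n
      have := hJmono.ge_of_tendsto hlim n
      exact le_antisymm (by linarith) (hJ0 n)
    have hDz : ∀ᵐ s ∂P, ∀ n, s ∈ A n → D s = 0 := by
      refine ae_all_iff.2 fun n => ?_
      have := (setIntegral_eq_zero_iff_of_nonneg_ae (ae_restrict_of_ae hD0) (hDi n)).1 (hzero n)
      exact (ae_restrict_iff' (hAm n)).1 this
    filter_upwards [hDz, hXpos, hWpos] with s hs h1 h2
    have hsU : s ∈ ⋃ n, A n := by rw [hAU]; trivial
    obtain ⟨n, hn⟩ := Set.mem_iUnion.1 hsU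
    by_contra hne
    have h3 := tangent_lt hsf h2 h1 hne
    have h4 := hs n hn
    simp only [hD, hg] at h4
    linarith
  · refine integral_congr_ae ?_
    filter_upwards [hae] with s hs
    rw [hs]
end

section
/- α-concavity of the expected α-information along α-geodesics: let α ∈ (−1, 1), let V be a probability measure on S, let p, q be probability densities with respect to V, and for t ∈ [0,1] define m_t = (1−t) p^{(1−α)/2} + t q^{(1−α)/2}, Z_t = ∫ m_t^{2/(1−α)} dV (assumed positive), and the normalized α-geodesic γ_t = m_t^{2/(1−α)} / Z_t. Then ∫ γ_t(s) I_α(s; γ_t) dV(s) ≥ (1−t) ∫ p(s) I_α(s; p) dV(s) + t ∫ q(s) I_α(s; q) dV(s). -/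
/-!
Put `a = (1 - α) / 2 ∈ (0, 1)` and `c = 4 / (1 - α ^ 2) > 0`. For a density `f`, the integrand
`f * I_α(f)` equals `c * (f ^ a - f)`, so its integral is `c * (∫ f ^ a - 1)`.
The power `γ ^ a` is `m / Z ^ a`, where `m = (1 - t) p ^ a + t q ^ a`, so the claim reduces to
`∫ m ≤ (∫ m) / Z ^ a`. This holds because `∫ m ≥ 0` and `Z ≤ 1`, the latter by convexity of
`x ↦ x ^ (1 / a)`, which gives `m ^ (1 / a) ≤ (1 - t) p + t q` pointwise.
-/

open MeasureTheory

/-- Valid also at `x = 0`, where both sides vanish since `a ≠ 0`. -/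
lemma mul_alpha_info_eq {a : ℝ} (ha : 0 < a) (c : ℝ) {x : ℝ} (hx : 0 ≤ x) :
    x * (c * (x ^ (a - 1) - 1)) = c * (x ^ a - x) := by
  rcases hx.eq_or_lt with rfl | hx
  · simp [Real.zero_rpow ha.ne']
  · rw [Real.rpow_sub_one hx.ne']
    field_simp

lemma integrable_rpow_of_le_one {S : Type*} [MeasurableSpace S] {V : Measure S}
    [IsProbabilityMeasure V] {a : ℝ} (ha : 0 < a) (ha1 : a ≤ 1) {f : S → ℝ}
    (hf : Measurable f) (hf0 : ∀ s, 0 ≤ f s) (hfi : Integrable f V) :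
    Integrable (fun s => f s ^ a) V := by
  refine ((integrable_const (1 : ℝ)).add hfi).mono' (hf.pow_const a).aestronglyMeasurable
    (Filter.Eventually.of_forall fun s => ?_)
  have h0 := hf0 s
  rw [Real.norm_of_nonneg (Real.rpow_nonneg h0 a)]
  simp only [Pi.add_apply]
  rcases le_total (f s) 1 with h | h
  · have := Real.rpow_le_one h0 h ha.le
    linarith
  · have := Real.rpow_le_rpow_of_exponent_le h ha1
    rw [Real.rpow_one] at this
    linarith

lemma integral_mul_alpha_info {S : Type*} [MeasurableSpace S] {V : Measure S}
    {a : ℝ} (ha : 0 < a) (c : ℝ) {f : S → ℝ} (hf0 : ∀ s, 0 ≤ f s)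
    (hfi : Integrable f V) (hfa : Integrable (fun s => f s ^ a) V) (hf1 : ∫ s, f s ∂V = 1) :
    ∫ s, f s * (c * (f s ^ (a - 1) - 1)) ∂V = c * (∫ s, f s ^ a ∂V - 1) := by
  simp_rw [fun s => mul_alpha_info_eq ha c (hf0 s)]
  rw [integral_const_mul, integral_sub hfa hfi, hf1]

/-- α-concavity of the expected α-information along
α-geodesics: for `α ∈ (−1,1)`, probability densities `p, q` w.r.t. a probability
measure `V`, `t ∈ [0,1]`, `m_t = (1−t) p^{(1−α)/2} + t q^{(1−α)/2}`,
`Z = ∫ m_t^{2/(1−α)} dV > 0` and the normalized geodesic `γ = m_t^{2/(1−α)}/Z`,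
`∫ γ I_α(·;γ) dV ≥ (1−t) ∫ p I_α(·;p) dV + t ∫ q I_α(·;q) dV`,
where `I_α(s;p) = (4/(1−α²))(p(s)^{−(α+1)/2} − 1)`. -/
theorem expected_alpha_information_concave_along_geodesics
    {S : Type*} [MeasurableSpace S]
    (V : Measure S) [IsProbabilityMeasure V]
    (α : ℝ) (hα : α ∈ Set.Ioo (-1 : ℝ) 1)
    (p q : S → ℝ) (hp : Measurable p) (hq : Measurable q)
    (hp0 : ∀ s, 0 ≤ p s) (hq0 : ∀ s, 0 ≤ q s)
    (hpi : Integrable p V) (hqi : Integrable q V)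
    (hp1 : ∫ s, p s ∂V = 1) (hq1 : ∫ s, q s ∂V = 1)
    (t : ℝ) (ht : t ∈ Set.Icc (0 : ℝ) 1)
    (Z : ℝ)
    (hZdef : Z = ∫ s, ((1 - t) * (p s) ^ ((1 - α) / 2)
      + t * (q s) ^ ((1 - α) / 2)) ^ (2 / (1 - α)) ∂V)
    (hZpos : 0 < Z) :
    (1 - t) * ∫ s, p s * ((4 / (1 - α ^ 2)) * ((p s) ^ (-(α + 1) / 2) - 1)) ∂V
      + t * ∫ s, q s * ((4 / (1 - α ^ 2)) * ((q s) ^ (-(α + 1) / 2) - 1)) ∂V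
    ≤ ∫ s,
        (((1 - t) * (p s) ^ ((1 - α) / 2) + t * (q s) ^ ((1 - α) / 2))
            ^ (2 / (1 - α)) / Z) *
        ((4 / (1 - α ^ 2)) *
          ((((1 - t) * (p s) ^ ((1 - α) / 2) + t * (q s) ^ ((1 - α) / 2))
              ^ (2 / (1 - α)) / Z) ^ (-(α + 1) / 2) - 1)) ∂V := by
  obtain ⟨hα1, hα2⟩ := hα
  obtain ⟨ht0, ht1⟩ := ht
  have hc : 0 < 4 / (1 - α ^ 2) := div_pos (by norm_num) (by nlinarith)
  generalize 4 / (1 - α ^ 2) = c at hc ⊢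
  obtain ⟨a, rfl⟩ : ∃ a, α = 1 - 2 * a := ⟨(1 - α) / 2, by ring⟩
  have ha : 0 < a := by linarith
  have ha1 : a ≤ 1 := by linarith
  have e1 : (1 - (1 - 2 * a)) / 2 = a := by ring
  have e2 : 2 / (1 - (1 - 2 * a)) = a⁻¹ := by
    rw [sub_sub_cancel]
    field_simp
  have e3 : -(1 - 2 * a + 1) / 2 = a - 1 := by ring
  simp only [e1, e2, e3] at hZdef ⊢
  have hpa := integrable_rpow_of_le_one ha ha1 hp hp0 hpi
  have hqa := integrable_rpow_of_le_one ha ha1 hq hq0 hqi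
  set m : S → ℝ := fun s => (1 - t) * p s ^ a + t * q s ^ a with hm
  have hm0 : ∀ s, 0 ≤ m s := fun s =>
    add_nonneg (mul_nonneg (by linarith) (Real.rpow_nonneg (hp0 s) a))
      (mul_nonneg ht0 (Real.rpow_nonneg (hq0 s) a))
  have hmi : Integrable m V := (hpa.const_mul _).add (hqa.const_mul _)
  have hmint : ∫ s, m s ∂V = (1 - t) * ∫ s, p s ^ a ∂V + t * ∫ s, q s ^ a ∂V := by
    rw [hm, integral_add (hpa.const_mul _) (hqa.const_mul _), integral_const_mul,
      integral_const_mul]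
  change Z = ∫ s, m s ^ a⁻¹ ∂V at hZdef
  change _ ≤ ∫ s, (m s ^ a⁻¹ / Z) * (c * ((m s ^ a⁻¹ / Z) ^ (a - 1) - 1)) ∂V
  -- A non-integrable function would have integral `0`, contradicting `0 < Z`.
  have hMi : Integrable (fun s => m s ^ a⁻¹) V := by
    by_contra h
    rw [integral_undef h] at hZdef
    exact hZpos.ne' hZdef
  have hle : ∀ s, m s ^ a⁻¹ ≤ (1 - t) * p s + t * q s := fun s => by
    have h := (convexOn_rpow (one_le_inv_iff₀.2 ⟨ha, ha1⟩)).2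
      (Set.mem_Ici.2 (Real.rpow_nonneg (hp0 s) a)) (Set.mem_Ici.2 (Real.rpow_nonneg (hq0 s) a))
      (sub_nonneg.2 ht1) ht0 (by ring)
    simpa only [smul_eq_mul, Real.rpow_rpow_inv (hp0 s) ha.ne',
      Real.rpow_rpow_inv (hq0 s) ha.ne'] using h
  have hZ1 : Z ≤ 1 := by
    have h := integral_mono hMi ((hpi.const_mul (1 - t)).add (hqi.const_mul t)) hle
    rw [← hZdef] at h
    simp only [Pi.add_apply] at h
    rw [integral_add (hpi.const_mul _) (hqi.const_mul _), integral_const_mul,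
      integral_const_mul, hp1, hq1] at h
    linarith
  have hγa : ∀ s, (m s ^ a⁻¹ / Z) ^ a = m s / Z ^ a := fun s => by
    rw [Real.div_rpow (Real.rpow_nonneg (hm0 s) _) hZpos.le, Real.rpow_inv_rpow (hm0 s) ha.ne']
  rw [integral_mul_alpha_info ha c hp0 hpi hpa hp1, integral_mul_alpha_info ha c hq0 hqi hqa hq1,
    integral_mul_alpha_info (f := fun s => m s ^ a⁻¹ / Z) ha c
      (fun s => div_nonneg (Real.rpow_nonneg (hm0 s) _) hZpos.le) (hMi.div_const Z)
      (by simpa only [hγa] using hmi.div_const (Z ^ a))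
      (by rw [integral_div, ← hZdef, div_self hZpos.ne'])]
  simp only [hγa]
  rw [integral_div]
  have key : ∫ s, m s ∂V ≤ (∫ s, m s ∂V) / Z ^ a :=
    le_div_self (integral_nonneg hm0) (Real.rpow_pos_of_pos hZpos a)
      (Real.rpow_le_one hZpos.le hZ1 ha.le)
  calc _ = c * (∫ s, m s ∂V - 1) := by rw [hmint]; ring
    _ ≤ _ := by gcongr
end

section
/- The family of optimal occupancies is closed under (α+2)-geodesic interpolation: let α > −1, V a measure on S, r : S → ℝ measurable, and μ_0, μ_1 ∈ ℝ such that 1 + μ_i r(s) > 0 for all s and Z_i = ∫ (1 + μ_i r)^{−2/(α+1)} dV ∈ (0, ∞), and set p_i = (1 + μ_i r)^{−2/(α+1)} / Z_i for i = 0, 1. Put ξ_i = Z_i^{(α+1)/2}. Then for every t ∈ [0,1], with t̂ = t ξ_1 / ((1−t) ξ_0 + t ξ_1) and μ̂ = (1−t̂) μ_0 + t̂ μ_1, the normalized (α+2)-geodesic point satisfies ((1−t) p_0^{−(α+1)/2} + t p_1^{−(α+1)/2})^{−2/(α+1)} / ∫ ((1−t) p_0^{−(α+1)/2} + t p_1^{−(α+1)/2})^{−2/(α+1)}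 dV = (1 + μ̂ r)^{−2/(α+1)} / ∫ (1 + μ̂ r)^{−2/(α+1)} dV. -/
open MeasureTheory

/-!
Raising `p_i = (1 + μ_i r)^{-2/(α+1)} / Z_i` to the power `-(α+1)/2` gives back the affine function
`ξ_i (1 + μ_i r)` (`rpow_div_rpow_neg`). The geodesic therefore mixes affine functions of `r`, and
with `D = (1-t) ξ_0 + t ξ_1 > 0` the mixture is `D (1 + μ̂ r)`. The constant `D^{-2/(α+1)}` factors
out of both the numerator and the normalizing integral and cancels. This works whether or not the
integrals converge, since `integral_const_mul` holds unconditionally.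
-/

/-- The powers `-2/(α+1)` and `-(α+1)/2` are mutually inverse, so a power density is sent back to
its base, rescaled by `Z ^ ((α+1)/2)`. -/
lemma rpow_div_rpow_neg {α x Z : ℝ} (hα : -1 < α) (hx : 0 < x) (hZ : 0 < Z) :
    (x ^ (-2 / (α + 1)) / Z) ^ (-(α + 1) / 2) = Z ^ ((α + 1) / 2) * x := by
  have h : α + 1 ≠ 0 := by linarith
  rw [Real.div_rpow (Real.rpow_nonneg hx.le _) hZ.le, ← Real.rpow_mul hx.le,
    show -2 / (α + 1) * (-(α + 1) / 2) = 1 by field_simp, Real.rpow_one, neg_div,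
    Real.rpow_neg hZ.le, div_inv_eq_mul, mul_comm]

/-- The family of optimal occupancies is closed under
(α+2)-geodesic interpolation: with `p_i = (1 + μ_i r)^{−2/(α+1)}/Z_i`,
`ξ_i = Z_i^{(α+1)/2}`, `t̂ = t ξ_1/((1−t)ξ_0 + t ξ_1)` and
`μ̂ = (1−t̂)μ_0 + t̂μ_1`, the normalized (α+2)-geodesic point between `p_0` and
`p_1` at time `t` equals `(1 + μ̂ r)^{−2/(α+1)}` normalized. -/
theorem optimal_occupancies_closed_under_geodesics
    {S : Type*} [MeasurableSpace S] (V : Measure S)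
    (α : ℝ) (hα : (-1 : ℝ) < α)
    (r : S → ℝ) (hr : Measurable r)
    (μ0 μ1 : ℝ)
    (h0pos : ∀ s, 0 < 1 + μ0 * r s) (h1pos : ∀ s, 0 < 1 + μ1 * r s)
    (h0i : Integrable (fun s => (1 + μ0 * r s) ^ (-2 / (α + 1))) V)
    (h1i : Integrable (fun s => (1 + μ1 * r s) ^ (-2 / (α + 1))) V)
    (Z0 Z1 : ℝ)
    (hZ0 : Z0 = ∫ s, (1 + μ0 * r s) ^ (-2 / (α + 1)) ∂V) (hZ0pos : 0 < Z0)
    (hZ1 : Z1 = ∫ s, (1 + μ1 * r s) ^ (-2 / (α + 1)) ∂V) (hZ1pos : 0 < Z1)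
    (t : ℝ) (ht : t ∈ Set.Icc (0 : ℝ) 1) :
    let p0 : S → ℝ := fun s => (1 + μ0 * r s) ^ (-2 / (α + 1)) / Z0
    let p1 : S → ℝ := fun s => (1 + μ1 * r s) ^ (-2 / (α + 1)) / Z1
    let ξ0 : ℝ := Z0 ^ ((α + 1) / 2)
    let ξ1 : ℝ := Z1 ^ ((α + 1) / 2)
    let th : ℝ := t * ξ1 / ((1 - t) * ξ0 + t * ξ1)
    let μh : ℝ := (1 - th) * μ0 + th * μ1
    (fun s => ((1 - t) * (p0 s) ^ (-(α + 1) / 2)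
          + t * (p1 s) ^ (-(α + 1) / 2)) ^ (-2 / (α + 1)) /
        ∫ s', ((1 - t) * (p0 s') ^ (-(α + 1) / 2)
          + t * (p1 s') ^ (-(α + 1) / 2)) ^ (-2 / (α + 1)) ∂V)
      = (fun s => (1 + μh * r s) ^ (-2 / (α + 1)) /
          ∫ s', (1 + μh * r s') ^ (-2 / (α + 1)) ∂V) := by
  intro p0 p1 ξ0 ξ1 th μh
  obtain ⟨ht0, ht1⟩ := ht
  have hξ0 : 0 < ξ0 := Real.rpow_pos_of_pos hZ0pos _
  have hξ1 : 0 < ξ1 := Real.rpow_pos_of_pos hZ1pos _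
  have hD : 0 < (1 - t) * ξ0 + t * ξ1 := by
    rcases ht0.eq_or_lt with rfl | h
    · simpa using hξ0
    · have := mul_nonneg (sub_nonneg.2 ht1) hξ0.le
      have := mul_pos h hξ1
      linarith
  have hmix : ∀ s, (1 - t) * (p0 s) ^ (-(α + 1) / 2) + t * (p1 s) ^ (-(α + 1) / 2)
      = ((1 - t) * ξ0 + t * ξ1) * (1 + μh * r s) := by
    intro s
    have e0 : (p0 s) ^ (-(α + 1) / 2) = ξ0 * (1 + μ0 * r s) :=
      rpow_div_rpow_neg hα (h0pos s) hZ0pos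
    have e1 : (p1 s) ^ (-(α + 1) / 2) = ξ1 * (1 + μ1 * r s) :=
      rpow_div_rpow_neg hα (h1pos s) hZ1pos
    have hth : ((1 - t) * ξ0 + t * ξ1) * th = t * ξ1 := mul_div_cancel₀ _ hD.ne'
    rw [e0, e1]
    simp only [μh]
    linear_combination (μ0 - μ1) * r s * hth
  have hbase : ∀ s, 0 ≤ 1 + μh * r s := by
    intro s
    have hth0 : 0 ≤ th := div_nonneg (mul_nonneg ht0 hξ1.le) hD.le
    have hth1 : th ≤ 1 :=
      (div_le_one hD).2 (le_add_of_nonneg_left (mul_nonneg (sub_nonneg.2 ht1) hξ0.le))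
    -- `1 + μh r` is a convex combination of the two positive bases.
    have h0 := mul_nonneg (sub_nonneg.2 hth1) (h0pos s).le
    have h1 := mul_nonneg hth0 (h1pos s).le
    simp only [μh]
    linarith
  have hpow : ∀ s, ((1 - t) * (p0 s) ^ (-(α + 1) / 2)
      + t * (p1 s) ^ (-(α + 1) / 2)) ^ (-2 / (α + 1))
      = ((1 - t) * ξ0 + t * ξ1) ^ (-2 / (α + 1)) * (1 + μh * r s) ^ (-2 / (α + 1)) := by
    intro s
    rw [hmix, Real.mul_rpow hD.le (hbase s)]
  simp only [hpow]
  rw [integral_const_mul]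
  funext s
  exact mul_div_mul_left _ _ (Real.rpow_pos_of_pos hD _).ne'
end
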